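/- There exists a linear code over the field with 5 elements of length 24, dimension 17, minimum distance exactly 3, and locality 3; its parameters attain the Singleton-type bound d ≤ n − k − ⌈k/r⌉ + 2 for codes of length n, dimension k, minimum distance d, and locality r, and its length satisfies n = q^2 − 1 for q = 5. -/

import Mathlib

/-!
A codeword of weight at most two is a linear relation between two columns of a parity-check matrix,
and a relation supported on a helper set together with one coordinate recovers that coordinate.
Both are visible in the matrix with column `(e_b, w)` at the point `w` of the fiber over `b`: the
row of `b` checks that the fiber over `b` sums to zero, which gives the locality, while distinct
columns `(e_b, w)` and `(e_b', w')` are never proportional, which gives distance at least three.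
Three columns of one fiber lie on an affine line, so they are dependent and the distance is three.
Over the field with 5 elements every nonzero fourth power is `1`, so the unramified split fibers
`w ^ 4 = f_4(b)` are those with `f_4(b) = 1`, each being the unit group; the 24 points are thus
indexed by the six base points and the four units.
-/

open Finset Function

section LinearCode

variable {R V ι : Type*} [Ring R] [AddCommGroup V] [Module R V]

/-- A code `C` has locality `r` if every coordinate of a codeword is determined by at most `r`
other coordinates, its helper set. -/
def HasLocality (C : Submodule R (ι → R)) (r : ℕ) : Prop :=
  ∀ i : ι, ∃ I : Finset ι, i ∉ I ∧ #I ≤ r ∧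
    ∀ x ∈ C, ∀ y ∈ C, (∀ j ∈ I, x j = y j) → x i = y i

variable [Fintype ι]

variable (R) in
/-- The linear code whose parity-check matrix has the vectors `h i` as its columns. The columns are
taken in an arbitrary module, so that no basis for the check symbols has to be chosen. -/
def parityCheckCode (h : ι → V) : Submodule R (ι → R) :=
  LinearMap.ker (Fintype.linearCombination R h)

lemma mem_parityCheckCode {h : ι → V} {x : ι → R} :
    x ∈ parityCheckCode R h ↔ ∑ i, x i • h i = 0 := by
  rw [parityCheckCode, LinearMap.mem_ker, Fintype.linearCombination_apply]

lemma finrank_parityCheckCode_add_finrank {K W : Type*} [DivisionRing K] [AddCommGroup W]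
    [Module K W] {h : ι → W} (hspan : Submodule.span K (Set.range h) = ⊤) :
    Module.finrank K (parityCheckCode K h) + Module.finrank K W = Fintype.card ι := by
  rw [add_comm, ← finrank_top K W, ← hspan, ← Fintype.range_linearCombination, parityCheckCode,
    LinearMap.finrank_range_add_finrank_ker, Module.finrank_fintype_fun_eq_card]

lemma lt_hammingNorm_of_linearIndepOn [DecidableEq R] {h : ι → V} {d : ℕ}
    (hind : ∀ s : Finset ι, #s ≤ d → LinearIndepOn R h s)
    {x : ι → R} (hx : x ∈ parityCheckCode R h) (hx0 : x ≠ 0) : d < hammingNorm x := by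
  by_contra! hle
  have hrel : ∑ i with x i ≠ 0, x i • h i = 0 := by
    rw [← mem_parityCheckCode.1 hx]
    refine sum_filter_of_ne fun i _ hi hxi ↦ hi ?_
    rw [hxi, zero_smul]
  obtain ⟨i, hi⟩ := ne_iff.1 hx0
  exact hi (linearIndepOn_finset_iff.1 (hind _ hle) x hrel i (mem_filter_univ i |>.2 hi))

lemma eq_of_mem_parityCheckCode [NoZeroDivisors R] {h : ι → V} (φ : V →ₗ[R] R) {i : ι}
    (hi : φ (h i) ≠ 0) {x y : ι → R} (hx : x ∈ parityCheckCode R h)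
    (hy : y ∈ parityCheckCode R h) (hxy : ∀ j ≠ i, φ (h j) ≠ 0 → x j = y j) : x i = y i := by
  have hcheck : ∑ j, (x j - y j) * φ (h j) = 0 := by
    simpa only [map_sum, map_smul, smul_eq_mul, map_zero, Pi.sub_apply] using
      congrArg φ (mem_parityCheckCode.1 (sub_mem hx hy))
  rw [Fintype.sum_eq_single i] at hcheck
  · exact sub_eq_zero.1 ((mul_eq_zero.1 hcheck).resolve_right hi)
  · intro j hj
    by_cases hφ : φ (h j) = 0
    · rw [hφ, mul_zero]
    · rw [hxy j hj hφ, sub_self, zero_mul]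

lemma hasLocality_parityCheckCode [NoZeroDivisors R] [DecidableEq R] {h : ι → V} {r : ℕ}
    (hφ : ∀ i, ∃ φ : V →ₗ[R] R, φ (h i) ≠ 0 ∧ #{j | φ (h j) ≠ 0} ≤ r + 1) :
    HasLocality (parityCheckCode R h) r := by
  classical
  intro i
  obtain ⟨φ, hi, hcard⟩ := hφ i
  refine ⟨({j | φ (h j) ≠ 0} : Finset ι).erase i, notMem_erase _ _, ?_, fun x hx y hy hxy ↦ ?_⟩
  · rw [card_erase_of_mem (mem_filter_univ i |>.2 hi)]
    exact Nat.sub_le_of_le_add hcard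
  · exact eq_of_mem_parityCheckCode φ hi hx hy fun j hji hj ↦
      hxy j (mem_erase.2 ⟨hji, mem_filter_univ j |>.2 hj⟩)

end LinearCode

section FiberCode

variable {K β ι : Type*} [Field K] [DecidableEq β] [Fintype ι]

/-- The parity-check column `(e_b, w)` of the point with coordinate `w` in the fiber over `b`. -/
def fiberColumn (P : β × K) : (β → K) × K :=
  (Pi.single P.1 1, P.2)

/-- The code on the points `p i = (b, w)` whose words sum to zero on each fiber of `(b, w) ↦ b`, and
also sum to zero over all points when weighted by `w`. -/
def fiberCode (p : ι → β × K) : Submodule K (ι → K) :=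
  parityCheckCode K fun i ↦ fiberColumn (p i)

lemma fiberColumn_ne_zero (P : β × K) : fiberColumn P ≠ 0 := fun h ↦
  one_ne_zero (Pi.single_eq_zero_iff.1 (Prod.ext_iff.1 h).1)

lemma fiberColumn_sub_fiberColumn (b : β) (v w : K) :
    fiberColumn (b, v) - fiberColumn (b, w) = (0, v - w) := by
  simp only [fiberColumn, Prod.mk_sub_mk, sub_self]

lemma linearIndepOn_fiberColumn_pair {P Q : β × K} (hPQ : P ≠ Q) :
    LinearIndepOn K fiberColumn {P, Q} := by
  obtain ⟨b, v⟩ := P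
  obtain ⟨b', w⟩ := Q
  refine (LinearIndepOn.pair_iff _ hPQ).2 fun c d hcd ↦ ?_
  obtain ⟨hfst, hsnd⟩ := Prod.ext_iff.1 hcd
  obtain rfl | hbb' := eq_or_ne b b'
  · have hvw : v - w ≠ 0 := sub_ne_zero.2 fun h ↦ hPQ (h ▸ rfl)
    have hsum : c + d = 0 := by simpa [fiberColumn] using congrFun hfst b
    have hweighted : c * v + d * w = 0 := hsnd
    have hc : c = 0 := (mul_eq_zero.1 (by linear_combination hweighted - w * hsum :
      c * (v - w) = 0)).resolve_right hvw
    exact ⟨hc, by rwa [hc, zero_add] at hsum⟩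
  · exact ⟨by simpa [fiberColumn, hbb'] using congrFun hfst b,
      by simpa [fiberColumn, hbb'.symm] using congrFun hfst b'⟩

lemma fiberColumn_affine_relation {P Q T : β × K} (hPQ : P.1 = Q.1) (hPT : P.1 = T.1) :
    (Q.2 - T.2) • fiberColumn P + (T.2 - P.2) • fiberColumn Q +
      (P.2 - Q.2) • fiberColumn T = 0 := by
  refine Prod.ext (funext fun b' ↦ ?_) ?_ <;>
    simp only [fiberColumn, ← hPQ, ← hPT, Prod.fst_add, Prod.snd_add, Prod.smul_fst, Prod.smul_snd,
      Pi.add_apply, Pi.smul_apply, smul_eq_mul, Prod.fst_zero, Prod.snd_zero, Pi.zero_apply] <;>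
    ring

lemma span_range_fiberColumn {ι : Type*} [Finite β] {p : ι → β × K}
    (hsurj : Surjective fun i ↦ (p i).1) {i j : ι} (hij : (p i).1 = (p j).1) (hne : p i ≠ p j) :
    Submodule.span K (Set.range fun i ↦ fiberColumn (p i)) = ⊤ := by
  set S := Submodule.span K (Set.range fun i ↦ fiberColumn (p i))
  have hcol (k : ι) : fiberColumn (p k) ∈ S := Submodule.subset_span ⟨k, rfl⟩
  have hw : (p i).2 - (p j).2 ≠ 0 := sub_ne_zero.2 fun h ↦ hne (Prod.ext hij h)
  have hsnd (c : K) : ((0, c) : (β → K) × K) ∈ S := by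
    have hdiff : ((0, (p i).2 - (p j).2) : (β → K) × K) ∈ S := by
      rw [← fiberColumn_sub_fiberColumn (p i).1]
      exact sub_mem (hcol i) (hij ▸ hcol j)
    simpa [hw] using S.smul_mem (c / ((p i).2 - (p j).2)) hdiff
  have hfst : Submodule.map (LinearMap.inl K (β → K) K) ⊤ ≤ S := by
    rw [← (Pi.basisFun K β).span_eq, Submodule.map_span_le]
    rintro _ ⟨b, rfl⟩
    obtain ⟨k, rfl⟩ := hsurj b
    simpa [fiberColumn] using sub_mem (hcol k) (hsnd (p k).2)
  refine eq_top_iff.2 fun x _ ↦ ?_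
  rw [← Prod.fst_add_snd x]
  exact add_mem (hfst (Submodule.mem_map_of_mem Submodule.mem_top)) (hsnd x.2)

lemma finrank_fiberCode_add_card [Fintype β] {p : ι → β × K} (hp : Injective p)
    (hsurj : Surjective fun i ↦ (p i).1) {b : β} (hb : 1 < #{i | (p i).1 = b}) :
    Module.finrank K (fiberCode p) + (Fintype.card β + 1) = Fintype.card ι := by
  obtain ⟨i, hi, j, hj, hij⟩ := one_lt_card.1 hb
  rw [mem_filter_univ] at hi hj
  rw [← finrank_parityCheckCode_add_finrank
      (span_range_fiberColumn hsurj (hi.trans hj.symm) (hp.ne hij)),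
    Module.finrank_prod, Module.finrank_fintype_fun_eq_card, Module.finrank_self, fiberCode]

lemma two_lt_hammingNorm_of_mem_fiberCode [DecidableEq K] {p : ι → β × K} (hp : Injective p)
    {x : ι → K} (hx : x ∈ fiberCode p) (hx0 : x ≠ 0) :
    2 < hammingNorm x := by
  classical
  refine lt_hammingNorm_of_linearIndepOn (fun s hs ↦ ?_) hx hx0
  obtain hs | hs | hs : #s = 0 ∨ #s = 1 ∨ #s = 2 := by omega
  · rw [card_eq_zero.1 hs, coe_empty]
    exact linearIndepOn_empty K _
  · obtain ⟨i, rfl⟩ := card_eq_one.1 hs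
    rw [coe_singleton]
    exact LinearIndepOn.singleton (fiberColumn_ne_zero (p i))
  · obtain ⟨i, j, hij, rfl⟩ := card_eq_two.1 hs
    rw [coe_pair, LinearIndepOn.pair_iff _ hij]
    exact (LinearIndepOn.pair_iff _ (hp.ne hij)).1 (linearIndepOn_fiberColumn_pair (hp.ne hij))

lemma exists_mem_fiberCode_hammingNorm_eq_three [DecidableEq K] {p : ι → β × K}
    (hp : Injective p) {b : β} (hb : 2 < #{i | (p i).1 = b}) :
    ∃ x ∈ fiberCode p, hammingNorm x = 3 := by
  classical
  obtain ⟨i, hi, j, hj, k, hk, hij, hik, hjk⟩ := two_lt_card.1 hb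
  rw [mem_filter_univ] at hi hj hk
  have hsnd {a c : ι} (hac : a ≠ c) (ha : (p a).1 = b) (hc : (p c).1 = b) :
      (p a).2 - (p c).2 ≠ 0 :=
    sub_ne_zero.2 fun h ↦ hac (hp (Prod.ext (ha.trans hc.symm) h))
  refine ⟨Pi.single i ((p j).2 - (p k).2) + Pi.single j ((p k).2 - (p i).2) +
    Pi.single k ((p i).2 - (p j).2), ?_, ?_⟩
  · rw [fiberCode, parityCheckCode, LinearMap.mem_ker]
    simpa only [map_add, Fintype.linearCombination_apply_single] using
      fiberColumn_affine_relation (hi.trans hj.symm) (hi.trans hk.symm)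
  · refine card_eq_three.2 ⟨i, j, k, hij, hik, hjk, ?_⟩
    have hxi := hsnd hjk hj hk
    have hxj := hsnd hik.symm hk hi
    have hxk := hsnd hij hi hj
    ext a
    by_cases hai : a = i
    · simp [hai, hij, hik, hxi]
    by_cases haj : a = j
    · simp [haj, hij.symm, hjk, hxj]
    by_cases hak : a = k
    · simp [hak, hik.symm, hjk.symm, hxk]
    · simp [hai, haj, hak]

lemma hasLocality_fiberCode {p : ι → β × K} {r : ℕ}
    (hcard : ∀ b, #{i | (p i).1 = b} ≤ r + 1) : HasLocality (fiberCode p) r := by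
  classical
  refine hasLocality_parityCheckCode fun i ↦
    ⟨LinearMap.proj (p i).1 ∘ₗ LinearMap.fst K (β → K) K, ?_, ?_⟩
  · simp [fiberColumn]
  · simpa [fiberColumn, Pi.single_apply, eq_comm] using hcard (p i).1

end FiberCode

section UnitFiber

variable {K β ι : Type*} [Monoid K]

/-- The points of a trivial fibration over `β` whose fibers are the unit group, numbered by `ι`.
Over the field of order `q` these are the fibers of `w ^ (q - 1) = 1`. -/
def unitFiberPoint (e : ι ≃ β × Kˣ) (i : ι) : β × K :=
  Prod.map id Units.val (e i)

lemma unitFiberPoint_injective (e : ι ≃ β × Kˣ) : Injective (unitFiberPoint e) :=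
  (injective_id.prodMap Units.val_injective).comp e.injective

lemma surjective_fst_unitFiberPoint (e : ι ≃ β × Kˣ) :
    Surjective fun i ↦ (unitFiberPoint e i).1 :=
  (Prod.fst_surjective (β := Kˣ)).comp e.surjective

lemma card_filter_unitFiberPoint_fst_eq [Fintype ι] [DecidableEq β] [Fintype Kˣ]
    (e : ι ≃ β × Kˣ) (b : β) : #{i | (unitFiberPoint e i).1 = b} = Fintype.card Kˣ := by
  refine card_nbij' (t := univ) (fun i ↦ (e i).2) (fun u ↦ e.symm (b, u)) ?_ ?_ ?_ ?_
  · simp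
  · intro u _
    exact mem_coe.2 (mem_filter_univ _ |>.2 (by simp [unitFiberPoint]))
  · rintro i hi
    obtain rfl : (e i).1 = b := mem_filter_univ i |>.1 hi
    exact e.symm_apply_apply i
  · intro u _
    simp

end UnitFiber

/-- There is a linear code over the field with 5 elements of length 24, dimension 17,
minimum distance exactly 3, and locality 3; its parameters meet the Singleton-type
bound d ≤ n - k - ⌈k/r⌉ + 2 with equality, and n = 5 ^ 2 - 1 for q = 5. -/
theorem optimal_LRC_F5_K3_surface :
    (∃ C : Submodule (ZMod 5) (Fin 24 → ZMod 5),
      Module.finrank (ZMod 5) C = 17 ∧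
      (∀ x : Fin 24 → ZMod 5, x ∈ C → x ≠ 0 →
        3 ≤ Nat.card {i : Fin 24 // x i ≠ 0}) ∧
      (∃ x : Fin 24 → ZMod 5, x ∈ C ∧ x ≠ 0 ∧ Nat.card {i : Fin 24 // x i ≠ 0} = 3) ∧
      (∀ i : Fin 24, ∃ I : Finset (Fin 24), i ∉ I ∧ I.card ≤ 3 ∧
        ∀ x ∈ C, ∀ y ∈ C, (∀ j ∈ I, x j = y j) → x i = y i)) ∧
    (3 : ℕ) = 24 - 17 - ⌈(17 : ℚ) / 3⌉₊ + 2 ∧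
    (24 : ℕ) = 5 ^ 2 - 1 := by
  have : Fact (Nat.Prime 5) := ⟨Nat.prime_five⟩
  have hunits : Fintype.card (ZMod 5)ˣ = 4 := ZMod.card_units 5
  let e : Fin 24 ≃ Fin 6 × (ZMod 5)ˣ := Fintype.equivOfCardEq (by simp [hunits])
  have hp := unitFiberPoint_injective e
  have hfiber (b : Fin 6) : #{i | (unitFiberPoint e i).1 = b} = 4 :=
    (card_filter_unitFiberPoint_fst_eq e b).trans hunits
  have hdim := finrank_fiberCode_add_card hp (surjective_fst_unitFiberPoint e)
    (b := 0) (by rw [hfiber]; norm_num)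
  obtain ⟨x, hx, hx3⟩ := exists_mem_fiberCode_hammingNorm_eq_three hp
    (b := 0) (by rw [hfiber]; norm_num)
  have hweight (x : Fin 24 → ZMod 5) : Nat.card {i // x i ≠ 0} = hammingNorm x := by
    rw [Nat.card_eq_fintype_card, Fintype.card_subtype, hammingNorm]
  refine ⟨⟨fiberCode (unitFiberPoint e), ?_, fun y hy hy0 ↦ ?_, ⟨x, hx, ?_, ?_⟩,
    hasLocality_fiberCode fun b ↦ (hfiber b).le⟩, by norm_num, by norm_num⟩
  · simpa using hdim
  · rw [hweight]
    exact two_lt_hammingNorm_of_mem_fiberCode hp hy hy0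
  · exact hammingNorm_ne_zero_iff.1 (by simp [hx3])
  · rw [hweight, hx3]
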